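/- There exist measurable functions M_j on 𝒳_{j−1} × 𝒳_j and h_j on 𝒳_j such that almost surely, for every j > 0, f_j(X_j) − E[f_j(X_j)] = M_j(X_{j−1}, X_j) + h_{j−1}(X_{j−1}) − h_j(X_j); moreover, sup_j ‖h_j‖_{L^∞} < ∞, sup_j ‖M_j‖_{L^∞} < ∞, and (M_j(X_{j−1}, X_j))_{j≥1} is a martingale-difference sequence with respect to the filtration generated by (X_0, X_1, …, X_j). -/

import Mathlib

/-!
Write `Y i = f i (X i) - 𝔼[f i (X i)]` and `ℱ j = σ(X 0, …, X j)`. By the Doeblin minorization, a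
transition over `n₀` steps contracts the oscillation of a bounded function by the factor `1 - γ`, so
`𝔼[Y i | ℱ j]` is a function of `X j` bounded by a constant times `(1 - γ) ^ ((i - j) / n₀)`.
Hence `h j (X j) = ∑ i > j, 𝔼[Y i | ℱ j]` converges uniformly, and the tower property gives the
Poisson equation `𝔼[Y (j + 1) + h (j + 1) (X (j + 1)) | ℱ j] = h j (X j)`. The martingale
difference is `Y (j + 1) + h (j + 1) (X (j + 1)) - h j (X j)`.
-/

open MeasureTheory ProbabilityTheory Filter
open scoped ENNReal NNReal

noncomputable section

variable {Ω : Type*} [MeasurableSpace Ω] {𝒳 : ℕ → Type*} [∀ j, MeasurableSpace (𝒳 j)]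

/-- The σ-algebra generated by `X_0, …, X_j`. -/
def pastSigma (X : ∀ j, Ω → 𝒳 j) (j : ℕ) : MeasurableSpace Ω :=
  ⨆ i ∈ Finset.range (j + 1), MeasurableSpace.comap (X i) inferInstance

/-- `X` is an inhomogeneous Markov chain (on the probability space `(Ω, μ)`) whose `n`-step
transition probabilities from time `j` are given by the Markov kernels `κ j n`: for every
measurable `Γ`, `ℙ(X_{j+n} ∈ Γ | X_0, …, X_j) = (κ j n) (X j) Γ` a.s. -/
structure IsInhomMarkov (μ : Measure Ω) (X : ∀ j, Ω → 𝒳 j)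
    (κ : ∀ j n, Kernel (𝒳 j) (𝒳 (j + n))) : Prop where
  meas : ∀ j, Measurable (X j)
  isMarkovKernel : ∀ j n, IsMarkovKernel (κ j n)
  cond : ∀ j n (Γ : Set (𝒳 (j + n))), MeasurableSet Γ →
    (μ[(fun ω => Γ.indicator (fun _ => (1 : ℝ)) (X (j + n) ω)) | pastSigma X j])
      =ᵐ[μ] fun ω => (κ j n (X j ω) Γ).toReal

/-- The standard normal distribution function `Φ`. -/
def stdNormalCDF (t : ℝ) : ℝ := (gaussianReal 0 1 (Set.Iic t)).toReal

lemma summable_pow_div {r : ℝ} (hr₀ : 0 ≤ r) (hr₁ : r < 1) {n : ℕ} (hn : 0 < n) :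
    Summable fun k : ℕ => r ^ (k / n) := by
  have : NeZero n := ⟨hn.ne'⟩
  have hprod : Summable fun p : ℕ × Fin n => r ^ p.1 * 1 :=
    (summable_geometric_of_lt_one hr₀ hr₁).mul_of_nonneg (g := fun _ : Fin n => (1 : ℝ))
      Summable.of_finite (fun k => pow_nonneg hr₀ k) fun _ => zero_le_one
  simpa [Function.comp_def] using (Nat.divModEquiv n).summable_iff.2 hprod

section Minorization

variable {α : Type*} [MeasurableSpace α] {ν ρ : Measure α} [IsProbabilityMeasure ν]
  [IsProbabilityMeasure ρ] {γ : ℝ} {φ : α → ℝ} {a b : ℝ}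

lemma le_integral_of_smul_le (hγ : 0 ≤ γ) (hle : ENNReal.ofReal γ • ρ ≤ ν)
    (hν : Integrable φ ν) (hρ : Integrable φ ρ) (ha : ∀ x, a ≤ φ x) :
    γ * ∫ x, φ x ∂ρ + (1 - γ) * a ≤ ∫ x, φ x ∂ν := by
  have hmono := integral_mono_measure (f := fun x => φ x - a) hle
    (ae_of_all _ fun x => sub_nonneg.2 (ha x)) (hν.sub (integrable_const a))
  rw [integral_smul_measure, ENNReal.toReal_ofReal hγ, smul_eq_mul,
    integral_sub hν (integrable_const a), integral_sub hρ (integrable_const a)] at hmono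
  simp only [integral_const, probReal_univ, one_smul] at hmono
  linarith

lemma integral_mem_Icc_of_smul_le (hγ : 0 ≤ γ) (hle : ENNReal.ofReal γ • ρ ≤ ν)
    (hφ : Measurable φ) (hab : ∀ x, φ x ∈ Set.Icc a b) :
    ∫ x, φ x ∂ν ∈ Set.Icc (γ * ∫ x, φ x ∂ρ + (1 - γ) * a) (γ * ∫ x, φ x ∂ρ + (1 - γ) * b) := by
  have hν : Integrable φ ν := .of_mem_Icc a b hφ.aemeasurable (ae_of_all _ hab)
  have hρ : Integrable φ ρ := .of_mem_Icc a b hφ.aemeasurable (ae_of_all _ hab)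
  refine ⟨le_integral_of_smul_le hγ hle hν hρ fun x => (hab x).1, ?_⟩
  have hneg := le_integral_of_smul_le hγ hle hν.neg hρ.neg fun x => neg_le_neg (hab x).2
  simp only [Pi.neg_apply, integral_neg] at hneg
  linarith

end Minorization

section CondExp

variable {Ω' : Type*} {m m₁ m₂ m₀ : MeasurableSpace Ω'} {μ : Measure Ω'}

lemma condExp_sub_ae_eq_zero {E : Type*} [NormedAddCommGroup E] [NormedSpace ℝ E]
    [CompleteSpace E] (hm : m ≤ m₀) [SigmaFinite (μ.trim hm)] {Y H : Ω' → E}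
    (hY : Integrable Y μ) (hH : μ[Y | m] =ᵐ[μ] H) : μ[Y - H | m] =ᵐ[μ] 0 :=
  calc μ[Y - H | m]
      =ᵐ[μ] μ[Y | m] - μ[H | m] := condExp_sub hY (integrable_condExp.congr hH) m
    _ =ᵐ[μ] H - H := hH.sub <| (condExp_congr_ae hH.symm).trans <|
        (condExp_condExp_of_le le_rfl hm).trans hH
    _ = 0 := sub_self H

lemma tsum_lintegral_enorm_ne_top {E : Type*} [SeminormedAddGroup E] [IsFiniteMeasure μ]
    {V : ℕ → Ω' → E} {b : ℕ → ℝ} (hb : Summable b) (hVb : ∀ k ω, ‖V k ω‖ ≤ b k) :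
    ∑' k, ∫⁻ ω, ‖V k ω‖ₑ ∂μ ≠ ∞ := by
  refine ne_top_of_le_ne_top (b := ∑' k, ENNReal.ofReal (b k) * μ Set.univ) ?_
    (ENNReal.tsum_le_tsum fun k => ?_)
  · rw [ENNReal.tsum_mul_right]
    exact ENNReal.mul_ne_top hb.tsum_ofReal_ne_top (measure_ne_top μ Set.univ)
  · rw [← lintegral_const]
    exact lintegral_mono fun ω => by
      rw [← ofReal_norm]
      exact ENNReal.ofReal_le_ofReal (hVb k ω)

lemma condExp_add_tsum_ae_eq [IsFiniteMeasure μ] (h₁₂ : m₁ ≤ m₂) (h₂ : m₂ ≤ m₀)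
    {Z U V : ℕ → Ω' → ℝ} {b : ℕ → ℝ} (hb : Summable b) (hZ : Integrable (Z 0) μ)
    (hU : ∀ k, μ[Z k | m₁] =ᵐ[μ] U k) (hV : ∀ k, μ[Z (k + 1) | m₂] =ᵐ[μ] V k)
    (hUb : ∀ k ω, ‖U k ω‖ ≤ b k) (hVb : ∀ k ω, ‖V k ω‖ ≤ b k) :
    μ[fun ω => Z 0 ω + ∑' k, V k ω | m₁] =ᵐ[μ] fun ω => ∑' k, U k ω := by
  have hVm (k) : AEStronglyMeasurable (V k) μ := (integrable_condExp.congr (hV k)).1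
  have hVint : Integrable (fun ω => ∑' k, V k ω) μ :=
    .of_bound (AEMeasurable.tsum fun k => (hVm k).aemeasurable).aestronglyMeasurable (∑' k, b k)
      (ae_of_all _ fun ω => tsum_of_norm_bounded hb.hasSum (hVb · ω))
  have htower (k) : μ[V k | m₁] =ᵐ[μ] U (k + 1) :=
    (condExp_congr_ae (hV k).symm).trans <|
      (condExp_condExp_of_le h₁₂ h₂).trans (hU (k + 1))
  have hsum (ω) : Summable (U · ω) := .of_norm_bounded hb (hUb · ω)
  filter_upwards [condExp_add hZ hVint m₁, condExp_tsum hVm (tsum_lintegral_enorm_ne_top hb hVb),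
    hU 0, ae_all_iff.2 htower] with ω hadd htsum hU₀ hUsucc
  calc (μ[fun ω => Z 0 ω + ∑' k, V k ω | m₁]) ω
      = (μ[Z 0 | m₁]) ω + (μ[fun ω => ∑' k, V k ω | m₁]) ω := hadd
    _ = U 0 ω + ∑' k, U (k + 1) ω := by rw [hU₀, htsum, tsum_congr hUsucc]
    _ = ∑' k, U k ω := (hsum ω).tsum_eq_zero_add.symm

variable {α β E : Type*} [MeasurableSpace α] [MeasurableSpace β] [NormedAddCommGroup E]
  [NormedSpace ℝ E] [CompleteSpace E] [IsFiniteMeasure μ] {X : Ω' → α} {Y : Ω' → β}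
  {κ : Kernel α β} [IsFiniteKernel κ]

lemma comp_map_restrict_eq_of_condExp_indicator (hm : m ≤ m₀) (hX : Measurable X)
    (hY : Measurable Y)
    (hκ : ∀ Γ, MeasurableSet Γ → μ[fun ω => Γ.indicator (fun _ => (1 : ℝ)) (Y ω) | m]
      =ᵐ[μ] fun ω => (κ (X ω) Γ).toReal)
    {s : Set Ω'} (hs : MeasurableSet[m] s) :
    κ ∘ₘ (μ.restrict s).map X = (μ.restrict s).map Y := by
  ext Γ hΓ
  have hκX : Measurable fun ω => κ (X ω) Γ := (κ.measurable_coe hΓ).comp hX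
  have hfin : ∫⁻ ω in s, κ (X ω) Γ ∂μ ≠ ∞ :=
    ne_top_of_le_ne_top (lintegral_const_lt_top κ.bound_ne_top).ne
      (lintegral_mono fun ω => κ.measure_le_bound (X ω) Γ)
  have hreal : (∫⁻ ω in s, κ (X ω) Γ ∂μ).toReal = μ.real (s ∩ Y ⁻¹' Γ) := by
    rw [← integral_toReal hκX.aemeasurable (ae_of_all _ fun _ => measure_lt_top _ _)]
    calc ∫ ω in s, (κ (X ω) Γ).toReal ∂μ
        = ∫ ω in s, (μ[(Y ⁻¹' Γ).indicator fun _ => (1 : ℝ) | m]) ω ∂μ :=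
          setIntegral_congr_ae (hm s hs) ((hκ Γ hΓ).mono fun _ h _ => h.symm)
      _ = ∫ ω in s, (Y ⁻¹' Γ).indicator (fun _ => (1 : ℝ)) ω ∂μ :=
          setIntegral_condExp hm ((integrable_const 1).indicator (hY hΓ)) hs
      _ = μ.real (s ∩ Y ⁻¹' Γ) := by
          rw [setIntegral_indicator (hY hΓ), setIntegral_const, smul_eq_mul, mul_one]
  rw [Measure.bind_apply hΓ κ.aemeasurable, lintegral_map (κ.measurable_coe hΓ) hX,
    Measure.map_apply hY hΓ, Measure.restrict_apply (hY hΓ), Set.inter_comm]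
  exact (ENNReal.toReal_eq_toReal_iff' hfin (measure_ne_top _ _)).1 hreal

lemma condExp_comp_eq_integral_kernel (hm : m ≤ m₀) (hX : Measurable[m] X) (hY : Measurable Y)
    (hκ : ∀ Γ, MeasurableSet Γ → μ[fun ω => Γ.indicator (fun _ => (1 : ℝ)) (Y ω) | m]
      =ᵐ[μ] fun ω => (κ (X ω) Γ).toReal)
    {φ : β → E} (hφ : StronglyMeasurable φ) (hφY : Integrable (fun ω => φ (Y ω)) μ) :
    μ[fun ω => φ (Y ω) | m] =ᵐ[μ] fun ω => ∫ y, φ y ∂κ (X ω) := by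
  have hX₀ : Measurable X := hX.mono hm le_rfl
  have hcomp {s} (hs : MeasurableSet[m] s) :=
    comp_map_restrict_eq_of_condExp_indicator hm hX₀ hY hκ hs
  have hint {s} (hs : MeasurableSet[m] s) : Integrable φ (κ ∘ₘ (μ.restrict s).map X) := by
    rw [hcomp hs]
    exact (integrable_map_measure hφ.aestronglyMeasurable hY.aemeasurable).2 hφY.integrableOn
  have hψ : StronglyMeasurable fun x => ∫ y, φ y ∂κ x := hφ.integral_kernel
  refine (ae_eq_condExp_of_forall_setIntegral_eq hm hφY (fun s hs _ => ?_) (fun s hs _ => ?_)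
    (hψ.comp_measurable hX).aestronglyMeasurable).symm
  · have hi := hint hs
    rw [Measure.comp_eq_comp_const_apply] at hi
    exact (integrable_map_measure hψ.aestronglyMeasurable hX₀.aemeasurable).1 hi.integral_comp
  · have hi := hint hs
    rw [Measure.comp_eq_comp_const_apply] at hi
    calc ∫ ω in s, ∫ y, φ y ∂κ (X ω) ∂μ
        = ∫ x, ∫ y, φ y ∂κ x ∂(μ.restrict s).map X :=
          (integral_map hX₀.aemeasurable hψ.aestronglyMeasurable).symm
      _ = ∫ y, φ y ∂(κ ∘ₘ (μ.restrict s).map X) := by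
          rw [Measure.comp_eq_comp_const_apply, Kernel.integral_comp hi, Kernel.const_apply]
      _ = ∫ ω in s, φ (Y ω) ∂μ := by
          rw [hcomp hs, integral_map hY.aemeasurable hφ.aestronglyMeasurable]

end CondExp

lemma abs_integral_le_of_abs_le {α : Type*} [MeasurableSpace α] (μ : Measure α)
    [IsProbabilityMeasure μ] {f : α → ℝ} {C : ℝ} (hC : ∀ x, |f x| ≤ C) : |∫ x, f x ∂μ| ≤ C := by
  simpa using norm_integral_le_of_norm_le_const (μ := μ) (f := f) (ae_of_all μ hC)

lemma exists_measurable_abs_le_ae_eq {α : Type*} [MeasurableSpace α] {μ : Measure Ω} {X : Ω → α}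
    {f : α → ℝ} (hf : Measurable f) {C : ℝ} (hC₀ : 0 ≤ C) (hC : ∀ᵐ ω ∂μ, |f (X ω)| ≤ C) :
    ∃ F : α → ℝ, Measurable F ∧ (∀ x, |F x| ≤ C) ∧
      (fun ω => F (X ω)) =ᵐ[μ] fun ω => f (X ω) := by
  refine ⟨{x | |f x| ≤ C}.indicator f, hf.indicator (measurableSet_le hf.abs measurable_const),
    fun x => ?_, hC.mono fun ω hω => Set.indicator_of_mem (s := {x | |f x| ≤ C}) hω f⟩
  rw [Set.indicator_apply]
  split_ifs with hx
  · exact hx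
  · rwa [abs_zero]

lemma pastSigma_le {X : ∀ j, Ω → 𝒳 j} (hX : ∀ j, Measurable (X j)) (j : ℕ) :
    pastSigma X j ≤ ‹MeasurableSpace Ω› :=
  iSup₂_le fun i _ => (hX i).comap_le

omit [MeasurableSpace Ω] in
lemma pastSigma_mono (X : ∀ j, Ω → 𝒳 j) : Monotone (pastSigma X) := fun _ _ hij =>
  biSup_mono fun _ hk => Finset.range_mono (Nat.succ_le_succ hij) hk

omit [MeasurableSpace Ω] in
lemma measurable_pastSigma (X : ∀ j, Ω → 𝒳 j) (j : ℕ) : Measurable[pastSigma X j] (X j) :=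
  measurable_iff_comap_le.2 <| le_iSup₂_of_le
    (f := fun i (_ : i ∈ Finset.range (j + 1)) => MeasurableSpace.comap (X i) inferInstance)
    j (Finset.self_mem_range_succ j) le_rfl

namespace IsInhomMarkov

variable {μ : Measure Ω} {X : ∀ j, Ω → 𝒳 j} {κ : ∀ j n, Kernel (𝒳 j) (𝒳 (j + n))}

lemma condExp_comp [IsFiniteMeasure μ] (hX : IsInhomMarkov μ X κ) (j n : ℕ) {φ : 𝒳 (j + n) → ℝ}
    (hφ : Measurable φ) {a b : ℝ} (hab : ∀ x, φ x ∈ Set.Icc a b) :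
    μ[fun ω => φ (X (j + n) ω) | pastSigma X j] =ᵐ[μ] fun ω => ∫ y, φ y ∂κ j n (X j ω) :=
  have := hX.isMarkovKernel j n
  condExp_comp_eq_integral_kernel (pastSigma_le hX.meas j) (measurable_pastSigma X j)
    (hX.meas (j + n)) (hX.cond j n) hφ.stronglyMeasurable
    (.of_mem_Icc a b (hφ.comp (hX.meas _)).aemeasurable (ae_of_all _ fun _ => hab _))

variable [IsProbabilityMeasure μ] {n₀ : ℕ} {γ : ℝ} {m : ∀ j, Measure (𝒳 j)}

-- The kernels satisfy Chapman–Kolmogorov only almost surely along the chain, so `∫ y, φ y ∂κ j n x`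
-- need not have small oscillation in `x`. The version `v` is built instead by composing `n₀`-step
-- kernels backwards from time `i`, each of which shrinks the oscillation by the factor `1 - γ`.
lemma exists_condExp_eq_comp_mem_Icc (hX : IsInhomMarkov μ X κ)
    (hm : ∀ j, IsProbabilityMeasure (m j)) (hγ : 0 ≤ γ)
    (hle : ∀ j x, ENNReal.ofReal γ • m (j + n₀) ≤ κ j n₀ x)
    {i : ℕ} {φ : 𝒳 i → ℝ} (hφ : Measurable φ) {a b : ℝ} (hab : ∀ x, φ x ∈ Set.Icc a b) (p : ℕ) :
    ∀ j, j + n₀ * p ≤ i → ∃ (v : 𝒳 j → ℝ) (c : ℝ), Measurable v ∧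
      (∀ x, v x ∈ Set.Icc c (c + (1 - γ) ^ p * (b - a))) ∧
      μ[fun ω => φ (X i ω) | pastSigma X j] =ᵐ[μ] fun ω => v (X j ω) := by
  induction p with
  | zero =>
    intro j hji
    obtain ⟨n, rfl⟩ := Nat.exists_eq_add_of_le (show j ≤ i by simpa using hji)
    have := hX.isMarkovKernel j n
    refine ⟨fun x => ∫ y, φ y ∂κ j n x, a, hφ.stronglyMeasurable.integral_kernel.measurable,
      fun x => ?_, hX.condExp_comp j n hφ hab⟩
    rw [pow_zero, one_mul, add_sub_cancel]
    exact (convex_Icc a b).integral_mem isClosed_Icc (ae_of_all _ hab)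
      (.of_mem_Icc a b hφ.aemeasurable (ae_of_all _ hab))
  | succ p ih =>
    intro j hji
    obtain ⟨v, c, hv, hvc, hvE⟩ := ih (j + n₀) (by rw [mul_add] at hji; omega)
    have := hX.isMarkovKernel j n₀
    have := hm (j + n₀)
    refine ⟨fun x => ∫ y, v y ∂κ j n₀ x, γ * ∫ y, v y ∂m (j + n₀) + (1 - γ) * c,
      hv.stronglyMeasurable.integral_kernel.measurable, fun x => ?_, ?_⟩
    · convert integral_mem_Icc_of_smul_le hγ (hle j x) hv hvc using 2
      ring
    · calc μ[fun ω => φ (X i ω) | pastSigma X j]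
          =ᵐ[μ] μ[μ[fun ω => φ (X i ω) | pastSigma X (j + n₀)] | pastSigma X j] :=
            (condExp_condExp_of_le (pastSigma_mono X (Nat.le_add_right j n₀))
              (pastSigma_le hX.meas _)).symm
        _ =ᵐ[μ] μ[fun ω => v (X (j + n₀) ω) | pastSigma X j] := condExp_congr_ae hvE
        _ =ᵐ[μ] fun ω => ∫ y, v y ∂κ j n₀ (X j ω) := hX.condExp_comp j n₀ hv hvc

lemma exists_condExp_sub_integral_eq_comp (hX : IsInhomMarkov μ X κ)
    (hm : ∀ j, IsProbabilityMeasure (m j)) (hγ : 0 ≤ γ)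
    (hle : ∀ j x, ENNReal.ofReal γ • m (j + n₀) ≤ κ j n₀ x)
    {i j : ℕ} (hji : j ≤ i) {φ : 𝒳 i → ℝ} (hφ : Measurable φ) {C : ℝ} (hC : ∀ x, |φ x| ≤ C) :
    ∃ w : 𝒳 j → ℝ, Measurable w ∧ (∀ x, |w x| ≤ (1 - γ) ^ ((i - j) / n₀) * (2 * C)) ∧
      μ[fun ω => φ (X i ω) - ∫ ω', φ (X i ω') ∂μ | pastSigma X j]
        =ᵐ[μ] fun ω => w (X j ω) := by
  have hσ := pastSigma_le hX.meas j
  obtain ⟨v, c, hv, hvc, hvE⟩ := hX.exists_condExp_eq_comp_mem_Icc hm hγ hle hφ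
    (fun x => abs_le.1 (hC x)) ((i - j) / n₀) j
    ((Nat.add_le_add_left (Nat.mul_div_le _ _) j).trans (Nat.add_sub_cancel' hji).le)
  rw [sub_neg_eq_add, ← two_mul] at hvc
  have hvint : Integrable (fun ω => v (X j ω)) μ :=
    .of_mem_Icc _ _ (hv.comp (hX.meas j)).aemeasurable (ae_of_all _ fun ω => hvc (X j ω))
  have hφint : Integrable (fun ω => φ (X i ω)) μ :=
    .of_bound (hφ.comp (hX.meas i)).aestronglyMeasurable C (ae_of_all _ fun _ => hC _)
  have hmean : ∫ ω, φ (X i ω) ∂μ = ∫ ω, v (X j ω) ∂μ :=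
    (integral_condExp hσ).symm.trans (integral_congr_ae hvE)
  refine ⟨fun x => v x - ∫ ω, φ (X i ω) ∂μ, hv.sub_const _, fun x => ?_, ?_⟩
  · have hmem := (convex_Icc _ _).integral_mem isClosed_Icc
      (ae_of_all μ fun ω => hvc (X j ω)) hvint
    rw [hmean]
    simpa [Real.dist_eq] using Real.dist_le_of_mem_Icc (hvc x) hmem
  · refine (condExp_sub hφint (integrable_const _) _).trans ?_
    rw [condExp_const hσ]
    exact hvE.sub .rfl

theorem exists_bounded_poisson_solution (hX : IsInhomMarkov μ X κ)
    (hm : ∀ j, IsProbabilityMeasure (m j)) (hn₀ : 0 < n₀) (hγ₀ : 0 < γ) (hγ₁ : γ ≤ 1)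
    (hle : ∀ j x, ENNReal.ofReal γ • m (j + n₀) ≤ κ j n₀ x)
    {F : ∀ j, 𝒳 j → ℝ} (hF : ∀ j, Measurable (F j)) {C : ℝ} (hC : ∀ j x, |F j x| ≤ C) :
    ∃ (h : ∀ j, 𝒳 j → ℝ) (B : ℝ), (∀ j, Measurable (h j)) ∧ (∀ j x, |h j x| ≤ B) ∧
      ∀ j, μ[fun ω => F (j + 1) (X (j + 1) ω) - ∫ ω', F (j + 1) (X (j + 1) ω') ∂μ +
        h (j + 1) (X (j + 1) ω) | pastSigma X j] =ᵐ[μ] fun ω => h j (X j ω) := by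
  choose! w hw hwb hwE using fun j i (hji : j ≤ i) =>
    hX.exists_condExp_sub_integral_eq_comp hm hγ₀.le hle hji (hF i) (hC i)
  let b : ℕ → ℝ := fun k => (1 - γ) ^ ((k + 1) / n₀) * (2 * C)
  have hb : Summable b :=
    ((summable_nat_add_iff 1).2
      (summable_pow_div (sub_nonneg.2 hγ₁) (sub_lt_self 1 hγ₀) hn₀)).mul_right _
  have hwb' (j k x) : ‖w j (j + 1 + k) x‖ ≤ b k := by
    simpa [b, add_assoc, add_comm 1 k] using hwb j (j + 1 + k) (by omega) x
  refine ⟨fun j x => ∑' k, w j (j + 1 + k) x, ∑' k, b k,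
    fun j => Measurable.tsum fun k => hw j _ (by omega),
    fun j x => tsum_of_norm_bounded hb.hasSum (hwb' j · x), fun j => ?_⟩
  let Y : ℕ → Ω → ℝ := fun i ω => F i (X i ω) - ∫ ω', F i (X i ω') ∂μ
  have hY : Integrable (Y (j + 1)) μ :=
    (Integrable.of_bound ((hF _).comp (hX.meas _)).aestronglyMeasurable C
      (ae_of_all _ fun _ => hC _ _)).sub (integrable_const _)
  refine condExp_add_tsum_ae_eq (Z := fun k => Y (j + 1 + k)) (pastSigma_mono X j.le_succ)
    (pastSigma_le hX.meas _) hb hY (fun k => hwE j (j + 1 + k) (by omega)) (fun k => ?_)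
    (fun k _ => hwb' j k _) (fun k _ => hwb' (j + 1) k _)
  rw [show j + 1 + (k + 1) = j + 1 + 1 + k by omega]
  exact hwE (j + 1) (j + 1 + 1 + k) (by omega)

end IsInhomMarkov

/-- **Lemma (martingale–coboundary decomposition under uniform Doeblin minorization).**
There exist measurable functions `M_j` on `𝒳_{j-1} × 𝒳_j` and `h_j` on `𝒳_j` such that a.s.
for every `j > 0`, `f_j(X_j) − E[f_j(X_j)] = M_j(X_{j-1}, X_j) + h_{j-1}(X_{j-1}) − h_j(X_j)`,
with `sup_j ‖h_j‖_∞ < ∞`, `sup_j ‖M_j‖_∞ < ∞`, and `(M_j(X_{j-1},X_j))_{j≥1}` a martingale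
difference sequence with respect to the natural filtration of the chain. -/
theorem martingale_coboundary_doeblin
    (μ : Measure Ω) [IsProbabilityMeasure μ]
    (X : ∀ j, Ω → 𝒳 j) (κ : ∀ j n, Kernel (𝒳 j) (𝒳 (j + n)))
    (hMarkov : IsInhomMarkov μ X κ)
    (n₀ : ℕ) (hn₀ : 0 < n₀) (γ : ℝ) (hγ : γ ∈ Set.Ioo (0 : ℝ) 1)
    (m : ∀ j, Measure (𝒳 j)) (hm : ∀ j, IsProbabilityMeasure (m j))
    (hDoeblin : ∀ j (x : 𝒳 j) (Γ : Set (𝒳 (j + n₀))), MeasurableSet Γ →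
      ENNReal.ofReal γ * m (j + n₀) Γ ≤ κ j n₀ x Γ)
    (f : ∀ j, 𝒳 j → ℝ) (hfmeas : ∀ j, Measurable (f j))
    (C : ℝ) (hbdd : ∀ j, ∀ᵐ ω ∂μ, |f j (X j ω)| ≤ C) :
    ∃ (h : ∀ j, 𝒳 j → ℝ) (M : ∀ j, 𝒳 j × 𝒳 (j + 1) → ℝ),
      (∀ j, Measurable (h j)) ∧ (∃ B, ∀ j x, |h j x| ≤ B) ∧
      (∀ j, Measurable (M j)) ∧ (∃ B, ∀ j y, |M j y| ≤ B) ∧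
      -- martingale difference property w.r.t. the filtration generated by `X_0, …, X_j`
      (∀ j, (μ[(fun ω => M j (X j ω, X (j + 1) ω)) | pastSigma X j]) =ᵐ[μ] 0) ∧
      (∀ j, ∀ᵐ ω ∂μ,
        f (j + 1) (X (j + 1) ω) - (∫ ω', f (j + 1) (X (j + 1) ω') ∂μ) =
          M j (X j ω, X (j + 1) ω) + h j (X j ω) - h (j + 1) (X (j + 1) ω)) := by
  have hle (j) (x : 𝒳 j) : ENNReal.ofReal γ • m (j + n₀) ≤ κ j n₀ x :=
    Measure.le_iff.2 (hDoeblin j x)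
  have hX := hMarkov.meas
  have hC : 0 ≤ C := (hbdd 0).exists.elim fun _ hω => (abs_nonneg _).trans hω
  choose F hF hFC hFf using fun j => exists_measurable_abs_le_ae_eq (hfmeas j) hC (hbdd j)
  obtain ⟨h, B, hh, hhB, hPoisson⟩ :=
    hMarkov.exists_bounded_poisson_solution hm hn₀ hγ.1 hγ.2.le hle hF hFC
  let D (j : ℕ) (y : 𝒳 (j + 1)) : ℝ :=
    F (j + 1) y - ∫ ω, F (j + 1) (X (j + 1) ω) ∂μ + h (j + 1) y
  have hD (j) : Measurable (D j) := by fun_prop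
  have hDB (j y) : ‖D j y‖ ≤ C + C + B :=
    norm_add_le_of_le (norm_sub_le_of_le (hFC _ y)
      (abs_integral_le_of_abs_le μ fun _ => hFC _ _)) (hhB _ y)
  refine ⟨h, fun j y => D j y.2 - h j y.1, hh, ⟨B, hhB⟩, fun j => by fun_prop,
    ⟨C + C + B + B, fun j y => norm_sub_le_of_le (hDB j y.2) (hhB j y.1)⟩, fun j => ?_, fun j => ?_⟩
  · exact condExp_sub_ae_eq_zero (pastSigma_le hX j)
      (.of_bound ((hD j).comp (hX (j + 1))).aestronglyMeasurable (C + C + B)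
        (ae_of_all μ fun _ => hDB j _)) (hPoisson j)
  · filter_upwards [hFf (j + 1)] with ω hω
    rw [← integral_congr_ae (hFf (j + 1)), ← hω]
    ring

end
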